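/- Let (A,S,Z,Φ) be a structured C*-algebra in which Z is bistable. If a ∈ S and both a*a and aa* lie in Z, then Φ(a*)Φ(a) = Φ(a)Φ(a*). -/

import Mathlib

variable {A : Type*} [CStarAlgebra A] [PartialOrder A] [StarOrderedRing A]

/-- A structured C*-algebra `(A, S, Z, Φ)`. -/
structure StructuredCStar (A : Type*) [CStarAlgebra A] [PartialOrder A]
    [StarOrderedRing A] where
  /-- The expectation. -/
  Φ : A →ₗ[ℂ] A
  /-- The distinguished closed *-subsemigroup. -/
  S : Set A
  /-- The distinguished central C*-subalgebra. -/
  Z : Set A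
  Φ_idem : ∀ a : A, Φ (Φ a) = Φ a
  Φ_contractive : ∀ a : A, ‖Φ a‖ ≤ ‖a‖
  Φ_pos : ∀ a : A, 0 ≤ a → 0 ≤ Φ a
  Φ_mul_left : ∀ a b : A, Φ (Φ a * b) = Φ a * Φ b
  Φ_mul_right : ∀ a b : A, Φ (a * Φ b) = Φ a * Φ b
  S_isClosed : IsClosed S
  S_mul : ∀ a ∈ S, ∀ b ∈ S, a * b ∈ S
  S_star : ∀ a ∈ S, star a ∈ S
  S_smul : ∀ (c : ℂ), ∀ a ∈ S, c • a ∈ S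
  Z_sub_S : Z ⊆ S
  Z_isClosed : IsClosed Z
  Z_add : ∀ a ∈ Z, ∀ b ∈ Z, a + b ∈ Z
  Z_mul : ∀ a ∈ Z, ∀ b ∈ Z, a * b ∈ Z
  Z_star : ∀ a ∈ Z, star a ∈ Z
  Z_smul : ∀ (c : ℂ), ∀ a ∈ Z, c • a ∈ Z
  Z_fixed : ∀ z ∈ Z, Φ z = z
  Z_central : ∀ z ∈ Z, ∀ a : A, z * Φ a = Φ a * z
  PhiS_add : ∀ x ∈ Φ '' S, ∀ y ∈ Φ '' S, x + y ∈ Φ '' S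
  PhiS_ideal_right : ∀ x ∈ Φ '' S, ∀ a : A, x * Φ a ∈ Φ '' S
  PhiS_ideal_left : ∀ x ∈ Φ '' S, ∀ a : A, Φ a * x ∈ Φ '' S
  S_sq_sub_PhiS : ∀ s ∈ S, star s * s ∈ Φ '' S
  PhiS_sub_S : ∀ s ∈ S, Φ s ∈ S

namespace StructuredCStar

variable (𝒜 : StructuredCStar A)

/-- `a <_s b` : domination witnessed by `s`. -/
def domBy (a s b : A) : Prop :=
  a = a * s * b ∧ a = b * s * a ∧
  a * s ∈ 𝒜.Φ '' 𝒜.S ∧ s * a ∈ 𝒜.Φ '' 𝒜.S ∧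
  b * s ∈ 𝒜.Z ∧ s * b ∈ 𝒜.Z

/-- `a < b` : domination. -/
def dom (a b : A) : Prop := ∃ s ∈ 𝒜.S, 𝒜.domBy a s b

/-- `N ⊆ S` is binormal. -/
def Binormal (N : Set A) : Prop :=
  ∀ a ∈ 𝒜.S, ∀ b ∈ 𝒜.S, a * b ∈ N → ∀ z ∈ N, a * z * b ∈ N

/-- `B ⊆ S` is bistable. -/
def Bistable (B : Set A) : Prop :=
  ∀ a ∈ 𝒜.S, ∀ b ∈ 𝒜.S, a * b ∈ B → 𝒜.Φ a * b ∈ B ∧ a * 𝒜.Φ b ∈ B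

/-- `P ⊆ S` is productive. -/
def Productive (P : Set A) : Prop :=
  ∀ a ∈ 𝒜.S, 𝒜.Φ a ∈ closure ((a * ·) '' P) ∧ 𝒜.Φ a ∈ closure ((· * a) '' P)

end StructuredCStar

namespace StructuredCStar

/-- The central subalgebra `Z` is commutative. -/
lemma Z_comm (𝒜 : StructuredCStar A) {y z : A} (hy : y ∈ 𝒜.Z) (hz : z ∈ 𝒜.Z) :
    y * z = z * y := by
  simpa only [𝒜.Z_fixed z hz] using 𝒜.Z_central y hy z

lemma Z_sub (𝒜 : StructuredCStar A) {y z : A} (hy : y ∈ 𝒜.Z) (hz : z ∈ 𝒜.Z) :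
    y - z ∈ 𝒜.Z := by
  have h := 𝒜.Z_add y hy _ (𝒜.Z_smul (-1) z hz)
  rwa [neg_one_smul, ← sub_eq_add_neg] at h

/-- The commutative C*-algebra `Z` has no nonzero elements of square zero. -/
lemma eq_zero_of_mul_self_eq_zero (𝒜 : StructuredCStar A) {z : A} (hz : z ∈ 𝒜.Z)
    (h : z * z = 0) : z = 0 := by
  have hcomm := 𝒜.Z_comm hz (𝒜.Z_star z hz)
  have hsq : star (star z * z) * (star z * z) = 0 := by
    rw [star_mul, star_star, mul_assoc, ← mul_assoc z, hcomm, mul_assoc, h, mul_zero, mul_zero]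
  exact CStarRing.star_mul_self_eq_zero_iff z |>.mp
    (CStarRing.star_mul_self_eq_zero_iff _ |>.mp hsq)

/-- If `Z` is bistable and `a, b ∈ S` have product in `Z`, then `Φ(a)Φ(b) ∈ Z`. -/
lemma Bistable.phi_mul_phi_mem {𝒜 : StructuredCStar A} (hZ : 𝒜.Bistable 𝒜.Z) {a b : A}
    (ha : a ∈ 𝒜.S) (hb : b ∈ 𝒜.S) (hab : a * b ∈ 𝒜.Z) : 𝒜.Φ a * 𝒜.Φ b ∈ 𝒜.Z := by
  have h := (hZ a ha b hb hab).1
  rwa [← 𝒜.Z_fixed _ h, 𝒜.Φ_mul_left] at h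

end StructuredCStar

/-- if `Z` is bistable, `a ∈ S` and `a*a, aa* ∈ Z`, then
`Φ(a*)Φ(a) = Φ(a)Φ(a*)`. -/
theorem StructuredCStar.phi_star_comm (𝒜 : StructuredCStar A)
    (hZ : 𝒜.Bistable 𝒜.Z) {a : A} (ha : a ∈ 𝒜.S)
    (h1 : star a * a ∈ 𝒜.Z) (h2 : a * star a ∈ 𝒜.Z) :
    𝒜.Φ (star a) * 𝒜.Φ a = 𝒜.Φ a * 𝒜.Φ (star a) := by
  have hp := hZ.phi_mul_phi_mem (𝒜.S_star a ha) ha h1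
  have hq := hZ.phi_mul_phi_mem ha (𝒜.S_star a ha) h2
  have hpa := 𝒜.Z_central _ hp a
  have hqa := 𝒜.Z_central _ hq (star a)
  have hpq := 𝒜.Z_comm hp hq
  have hd := 𝒜.Z_sub hp hq
  generalize 𝒜.Φ a = b at *
  generalize 𝒜.Φ (star a) = c at *
  have hpp : c * b * (c * b) = b * c * (c * b) := by
    rw [← mul_assoc (b * c), hqa]; simp only [mul_assoc]
  have hqq : b * c * (b * c) = c * b * (b * c) := by
    rw [← mul_assoc (c * b), hpa]; simp only [mul_assoc]
  refine sub_eq_zero.mp (𝒜.eq_zero_of_mul_self_eq_zero hd ?_)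
  rw [sub_mul, mul_sub, mul_sub, hpp, hqq, hpq]
  abel
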